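/- For every j ≥ 0: 𝔖(𝔗_{2j}(X)·X^k) = (D_j/D_{j−1})·δ_{2j+1,k} for all integers 0 ≤ k ≤ 2j+1, and 𝔖(𝔗_{2j+1}(X)·X^k) = (D_j/D_{j−1})·δ_{2j,k} for all integers 0 ≤ k ≤ 2j. -/

import Mathlib

open Polynomial MeasureTheory

/-!
The functional `S` annihilates even polynomials and sends `p(X²) X` to `L(p)`, where `L` is the
linear functional with moments `s`. For `p` monic of degree `n` and `L`-orthogonal to all lower
powers, every value to be computed is therefore `0` or `L(p Xᵐ)` with `m ≤ n`, and only
`L(p Xⁿ)` is left. The Hankel matrix of size `n + 1` maps the coefficient vector of `p` to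
`L(p Xⁿ)` times the last basis vector, so Cramer's rule for the leading coefficient `1` expresses
`L(p Xⁿ)` as a quotient of consecutive Hankel determinants.
-/

/-- The `n × n` Hankel matrix of the sequence `s`; its determinant is `D_{n-1}` in the usual
indexing of Hankel determinants, with value `1` at `n = 0`. -/
def hankelMatrix {α : Type*} (s : ℕ → α) (n : ℕ) : Matrix (Fin n) (Fin n) α :=
  Matrix.of fun i k => s (i + k)

lemma submatrix_castSucc_hankelMatrix {α : Type*} (s : ℕ → α) (n : ℕ) :
    (hankelMatrix s (n + 1)).submatrix Fin.castSucc Fin.castSucc = hankelMatrix s n := rfl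

section CommSemiring

variable {R : Type*} [CommSemiring R]

/-- The moment functional of the sequence `s`: the linear functional on polynomials that takes
the value `s j` at `X ^ j`. It replaces integration against a measure with moments `s`. -/
noncomputable def momentFunctional (s : ℕ → R) : R[X] →ₗ[R] R :=
  lsum fun j => s j • LinearMap.id

@[simp]
lemma momentFunctional_X_pow (s : ℕ → R) (j : ℕ) : momentFunctional s (X ^ j) = s j := by
  simp [momentFunctional, lsum_apply, ← monomial_one_right_eq_X_pow]

lemma hankelMatrix_mulVec_coeff (s : ℕ → R) {n : ℕ} {p : R[X]} (hp : p.natDegree < n)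
    (k : Fin n) :
    (hankelMatrix s n).mulVec (fun i => p.coeff i) k = momentFunctional s (p * X ^ (k : ℕ)) := by
  have hexpand : p * X ^ (k : ℕ) = ∑ i : Fin n, p.coeff i • X ^ (k + i : ℕ) := by
    conv_lhs => rw [p.as_sum_range_C_mul_X_pow' hp, Finset.sum_range, Finset.sum_mul]
    refine Finset.sum_congr rfl fun i _ => ?_
    rw [smul_eq_C_mul]
    ring
  simp [hexpand, hankelMatrix, Matrix.mulVec, dotProduct, mul_comm]

end CommSemiring

section CommRing

variable {R : Type*} [CommRing R]

lemma det_mul_apply_of_mulVec_eq_single {n : ℕ} {A : Matrix (Fin (n + 1)) (Fin (n + 1)) R}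
    {v : Fin (n + 1) → R} {j : Fin (n + 1)} {c : R} (h : A.mulVec v = Pi.single j c)
    (i : Fin (n + 1)) :
    A.det * v i = (-1) ^ (j + i : ℕ) * (A.submatrix j.succAbove i.succAbove).det * c := by
  calc A.det * v i = A.adjugate.mulVec (A.mulVec v) i := by
        simp [Matrix.mulVec_mulVec, Matrix.adjugate_mul, Matrix.smul_mulVec]
    _ = (-1) ^ (j + i : ℕ) * (A.submatrix j.succAbove i.succAbove).det * c := by
        simp [h, Matrix.adjugate_fin_succ_eq_det_submatrix, Matrix.mulVec_single]

theorem det_hankelMatrix_succ_of_orthogonal (s : ℕ → R) {p : R[X]} {n : ℕ} (hp : p.Monic)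
    (hdeg : p.natDegree = n) (horth : ∀ k < n, momentFunctional s (p * X ^ k) = 0) :
    (hankelMatrix s (n + 1)).det =
      (hankelMatrix s n).det * momentFunctional s (p * X ^ n) := by
  have hcoeff : (hankelMatrix s (n + 1)).mulVec (fun i => p.coeff i) =
      Pi.single (Fin.last n) (momentFunctional s (p * X ^ n)) := by
    ext k
    rw [hankelMatrix_mulVec_coeff s (hdeg.trans_lt n.lt_succ_self)]
    cases k using Fin.lastCases with
    | last => simp
    | cast k => simpa using horth k k.isLt
  have hlead : p.coeff n = 1 := hdeg ▸ hp.coeff_natDegree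
  simpa [hlead, ← two_mul, submatrix_castSucc_hankelMatrix] using
    det_mul_apply_of_mulVec_eq_single hcoeff (Fin.last n)

end CommRing

lemma integral_eval_eq_momentFunctional {𝕜 : Type*} [RCLike 𝕜] [MeasurableSpace 𝕜]
    {μ : Measure 𝕜} {s : ℕ → 𝕜} (hint : ∀ j : ℕ, Integrable (fun t : 𝕜 => t ^ j) μ)
    (hs : ∀ j, s j = ∫ t, t ^ j ∂μ) (p : 𝕜[X]) :
    ∫ t, p.eval t ∂μ = momentFunctional s p := by
  conv_rhs => rw [p.as_sum_range_C_mul_X_pow]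
  simp only [eval_eq_sum_range, ← smul_eq_C_mul, map_sum, map_smul, momentFunctional_X_pow,
    smul_eq_mul, hs]
  rw [integral_finsetSum _ fun i _ => (hint i).const_mul _]
  simp only [integral_const_mul]

lemma map_comp_X_pow_mul_X_pow {R M : Type*} [Semiring R] [AddCommMonoid M] [Module R M]
    {L S : R[X] →ₗ[R] M} {d r : ℕ} (h : ∀ j, S (X ^ (d * j + r)) = L (X ^ j)) (p : R[X])
    (m : ℕ) : S (p.comp (X ^ d) * X ^ (d * m + r)) = L (p * X ^ m) := by
  induction p using Polynomial.induction_on' with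
  | add p q hp hq => simp only [add_comp, add_mul, map_add, hp, hq]
  | monomial j a =>
    rw [monomial_comp, ← smul_eq_C_mul, smul_mul_assoc, map_smul, ← pow_mul, ← pow_add,
      ← add_assoc, ← mul_add, h, ← map_smul, pow_add, ← smul_mul_assoc, smul_X_eq_monomial]

section Field

variable {K : Type*} [Field K] {s : ℕ → K} {p : K[X]} {n : ℕ}

lemma momentFunctional_mul_X_pow_of_orthogonal (hp : p.Monic) (hdeg : p.natDegree = n)
    (horth : ∀ k < n, momentFunctional s (p * X ^ k) = 0)
    (hdet : (hankelMatrix s n).det ≠ 0) {m : ℕ} (hm : m ≤ n) :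
    momentFunctional s (p * X ^ m) =
      (hankelMatrix s (n + 1)).det / (hankelMatrix s n).det * (if n = m then 1 else 0) := by
  obtain hlt | rfl := hm.lt_or_eq
  · rw [horth m hlt, if_neg hlt.ne', mul_zero]
  · rw [if_pos rfl, mul_one, det_hankelMatrix_succ_of_orthogonal s hp hdeg horth,
      mul_div_cancel_left₀ _ hdet]

theorem stmt_2_general {S : K[X] →ₗ[K] K}
    (hSeven : ∀ j : ℕ, S (X ^ (2 * j)) = 0) (hSodd : ∀ j : ℕ, S (X ^ (2 * j + 1)) = s j)
    (hp : p.Monic) (hdeg : p.natDegree = n)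
    (horth : ∀ k < n, momentFunctional s (p * X ^ k) = 0)
    (hdet : (hankelMatrix s n).det ≠ 0) :
    (∀ k ≤ 2 * n + 1, S (p.comp (X ^ 2) * X ^ k) =
      (hankelMatrix s (n + 1)).det / (hankelMatrix s n).det * (if 2 * n + 1 = k then 1 else 0)) ∧
    (∀ k ≤ 2 * n, S (X * p.comp (X ^ 2) * X ^ k) =
      (hankelMatrix s (n + 1)).det / (hankelMatrix s n).det * (if 2 * n = k then 1 else 0)) := by
  have heven (m : ℕ) : S (p.comp (X ^ 2) * X ^ (2 * m)) = 0 :=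
    map_comp_X_pow_mul_X_pow (L := 0) (r := 0) hSeven p m
  have hodd : ∀ m, S (p.comp (X ^ 2) * X ^ (2 * m + 1)) = momentFunctional s (p * X ^ m) :=
    map_comp_X_pow_mul_X_pow (by simpa using hSodd) p
  have hmain (k : ℕ) (hk : k ≤ 2 * n + 1) : S (p.comp (X ^ 2) * X ^ k) =
      (hankelMatrix s (n + 1)).det / (hankelMatrix s n).det * (if 2 * n + 1 = k then 1 else 0) := by
    obtain ⟨m, rfl | rfl⟩ := k.even_or_odd'
    · rw [heven, if_neg (by omega), mul_zero]
    · rw [hodd, momentFunctional_mul_X_pow_of_orthogonal hp hdeg horth hdet (by omega)]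
      simp
  refine ⟨hmain, fun k hk => ?_⟩
  rw [mul_assoc, mul_left_comm, ← pow_succ', hmain (k + 1) (by omega)]
  simp

end Field

/-- For every `j ≥ 0`:
`𝔖(𝔗_{2j}·X^k) = (D_j/D_{j-1})·δ_{2j+1,k}` for `0 ≤ k ≤ 2j+1`, and
`𝔖(𝔗_{2j+1}·X^k) = (D_j/D_{j-1})·δ_{2j,k}` for `0 ≤ k ≤ 2j`.
Here `D (n+1)` is the Hankel determinant of order `n` and `D 0 = 1` plays the
role of `D_{-1}`. -/
theorem stmt_2
    (μ : Measure ℝ) [IsProbabilityMeasure μ]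
    (hint : ∀ j : ℕ, Integrable (fun t : ℝ => t ^ j) μ)
    (s : ℕ → ℝ) (hs : ∀ j, s j = ∫ t, t ^ j ∂μ)
    (D : ℕ → ℝ) (hD0 : D 0 = 1)
    (hD : ∀ n : ℕ, D (n + 1) = (Matrix.of fun i k : Fin (n + 1) => s (i.1 + k.1)).det)
    (hDpos : ∀ n, 0 < D n)
    (P : ℕ → Polynomial ℝ)
    (hPmonic : ∀ j, (P j).Monic) (hPdeg : ∀ j, (P j).natDegree = j)
    (hPorth : ∀ j k : ℕ, k < j → ∫ t, (P j).eval t * t ^ k ∂μ = 0)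
    (S : Polynomial ℝ →ₗ[ℝ] ℝ)
    (hSeven : ∀ j : ℕ, S (X ^ (2 * j)) = 0)
    (hSodd : ∀ j : ℕ, S (X ^ (2 * j + 1)) = s j)
    (T : ℕ → Polynomial ℝ)
    (hTeven : ∀ j, T (2 * j) = (P j).comp (X ^ 2))
    (hTodd : ∀ j, T (2 * j + 1) = X * (P j).comp (X ^ 2)) :
    ∀ j : ℕ,
      (∀ k : ℕ, k ≤ 2 * j + 1 →
        S (T (2 * j) * X ^ k) = (D (j + 1) / D j) * (if 2 * j + 1 = k then 1 else 0)) ∧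
      (∀ k : ℕ, k ≤ 2 * j →
        S (T (2 * j + 1) * X ^ k) = (D (j + 1) / D j) * (if 2 * j = k then 1 else 0)) := by
  have hDhankel : ∀ n, D n = (hankelMatrix s n).det
    | 0 => by rw [hD0, Matrix.det_fin_zero]
    | n + 1 => hD n
  have horth (j k : ℕ) (hk : k < j) : momentFunctional s (P j * X ^ k) = 0 := by
    simpa [← integral_eval_eq_momentFunctional hint hs] using hPorth j k hk
  intro j
  simpa only [hTeven, hTodd, hDhankel] using
    stmt_2_general hSeven hSodd (hPmonic j) (hPdeg j) (horth j) (hDhankel j ▸ (hDpos j).ne')
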